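/- arXiv:math/0410179 — 2 statements merged into one kernel-verified Lean document; each statement's English description precedes it below -/
import Mathlib

section
/- Let N be an odd prime and r an integer not divisible by N. Then the quadratic Gauss sum G(r,N) := ∑_{l=1}^{N} exp(2πi·r·l²/N) satisfies: G(r,N) = (r|N)·√N if N ≡ 1 (mod 4), and G(r,N) = i·(r|N)·√N if N ≡ 3 (mod 4), where (r|N) denotes the Legendre symbol of r modulo N (equal to 1 if r is a nonzero square modulo N and −1 otherwise). -/
open Complex Finset

/-- Gaussian binomials -/
def gbin (q : ℂ) : ℕ → ℕ → ℂ
  | _, 0 => 1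
  | 0, _ + 1 => 0
  | m + 1, k + 1 => gbin q m k + q ^ (k + 1) * gbin q m (k + 1)

theorem gbin_zero (q : ℂ) (m : ℕ) : gbin q m 0 = 1 := by cases m <;> rfl

theorem gbin_of_lt (q : ℂ) (m : ℕ) : ∀ k, m < k → gbin q m k = 0 := by
  induction m with
  | zero => intro k hk; cases k with
    | zero => omega
    | succ k => rfl
  | succ m ih => intro k hk; cases k with
    | zero => omega
    | succ k => rw [gbin, ih k (by omega), ih (k+1) (by omega)]; ring

theorem gbin_step (q : ℂ) (m : ℕ) : ∀ k, k ≤ m →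
    (1 - q ^ (k + 1)) * gbin q m (k + 1) = (1 - q ^ (m - k)) * gbin q m k := by
  induction m with
  | zero => intro k hk; obtain rfl : k = 0 := by omega
            simp [gbin]
  | succ m ih =>
    intro k hk
    cases k with
    | zero =>
      have := ih 0 (by omega)
      simp only [gbin, gbin_zero] at this ⊢
      simp only [zero_add, Nat.sub_zero, mul_one, pow_succ] at this ⊢
      linear_combination q * this
    | succ k =>
      have h1 := ih k (by omega)
      rcases Nat.lt_or_ge k m with hkm | hkm
      · have h2 := ih (k + 1) (by omega)
        obtain ⟨d, rfl⟩ : ∃ d, m = k + 1 + d := ⟨m - (k+1), by omega⟩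
        rw [show k + 1 + d + 1 - (k + 1) = d + 1 by omega]
        rw [show k + 1 + d - k = d + 1 by omega] at h1
        rw [show k + 1 + d - (k + 1) = d by omega] at h2
        rw [gbin, gbin]
        linear_combination q ^ (k + 1 + 1) * h2 + h1
      · obtain rfl : k = m := by omega
        rw [gbin_of_lt q (k+1) (k+1+1) (by omega)]; simp

theorem gbin_pascal (q : ℂ) (m k : ℕ) (hk : k ≤ m) :
    gbin q (m + 1) (k + 1) = gbin q m (k + 1) + q ^ (m - k) * gbin q m k := by
  rw [gbin]
  linear_combination - gbin_step q m k hk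

def gf (q : ℂ) (m : ℕ) : ℂ := ∑ k ∈ range (m + 1), (-1) ^ k * gbin q m k
def gg (q : ℂ) (m : ℕ) : ℂ := ∑ k ∈ range (m + 1), (-1) ^ k * q ^ k * gbin q m k

theorem gf_succ (q : ℂ) (m : ℕ) : gf q (m + 1) = gg q m - gf q m := by
  have hg : gg q m = ∑ k ∈ range (m + 2), (-1) ^ k * q ^ k * gbin q m k := by
    rw [sum_range_succ _ (m+1), gbin_of_lt q m (m+1) (by omega), gg]; simp
  rw [hg, gf, gf, sum_range_succ', sum_range_succ' _ (m+1), add_sub_right_comm, ← sum_sub_distrib]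
  congr 1
  · refine sum_congr rfl fun k _ => ?_
    rw [gbin]; ring
  · simp [gbin_zero]

theorem gg_succ (q : ℂ) (m : ℕ) : gg q (m + 1) = gg q m - q ^ (m + 1) * gf q m := by
  have hg : gg q m = ∑ k ∈ range (m + 2), (-1) ^ k * q ^ k * gbin q m k := by
    rw [sum_range_succ _ (m+1), gbin_of_lt q m (m+1) (by omega), gg]; simp
  rw [hg, gf, gg, sum_range_succ', sum_range_succ' _ (m+1), add_sub_right_comm, mul_sum,
    ← sum_sub_distrib]
  congr 1
  · refine sum_congr rfl fun k hk => ?_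
    have hk' : k ≤ m := by simp at hk; omega
    rw [gbin_pascal q m k hk', show q ^ (m + 1) = q ^ (k + 1) * q ^ (m - k) by
      rw [← pow_add]; congr 1; omega]
    ring
  · simp [gbin_zero]

theorem gf_even (q : ℂ) (n : ℕ) : gf q (2 * n) = ∏ j ∈ range n, (1 - q ^ (2 * j + 1)) := by
  induction n with
  | zero => simp [gf, gbin]
  | succ n ih =>
    rw [prod_range_succ, ← ih, show 2 * (n + 1) = 2 * n + 1 + 1 by ring, gf_succ, gf_succ, gg_succ]
    ring

theorem gbin_root (z : ℂ) (n : ℕ) (hz : IsPrimitiveRoot z (2 * n + 1)) : ∀ k, k ≤ 2 * n →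
    (-1) ^ k * gbin ((z ^ 2)⁻¹) (2 * n) k = z ^ (k * (k + 1)) := by
  have z0 : z ≠ 0 := hz.ne_zero (by omega)
  have hq : IsPrimitiveRoot ((z ^ 2)⁻¹) (2 * n + 1) :=
    (hz.pow_of_coprime 2 (by simp)).inv
  intro k
  induction k with
  | zero => simp [gbin_zero]
  | succ k ih =>
    intro hk
    have h := gbin_step ((z ^ 2)⁻¹) (2 * n) k (by omega)
    have ih := ih (by omega)
    have hne : (1 - (z ^ 2)⁻¹ ^ (k + 1)) ≠ 0 := by
      rw [sub_ne_zero]; exact (hq.pow_ne_one_of_pos_of_lt (by omega) (by omega)).symm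
    have e : (z ^ 2)⁻¹ ^ (2 * n - k) = z ^ (2 * (k + 1)) := by
      have h1 : (z ^ 2)⁻¹ ^ (2 * n - k) * (z ^ 2)⁻¹ ^ (k + 1) = 1 := by
        rw [← pow_add, ← hq.pow_eq_one]; congr 1; omega
      rw [eq_comm, pow_mul]
      rw [inv_pow _ (k+1)] at h1
      field_simp at h1
      rw [← h1, one_div]
    have e2 : (z ^ 2)⁻¹ ^ (k + 1) * z ^ (2 * (k + 1)) = 1 := by
      rw [pow_mul, inv_pow]; field_simp
    rw [e] at h
    apply mul_left_cancel₀ hne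
    rw [show (k + 1) * (k + 1 + 1) = k * (k + 1) + 2 * (k + 1) by ring,
      pow_add z, ← ih, pow_succ (-1 : ℂ)]
    linear_combination (-1) ^ k * (-1) * h + (-1)^k * gbin (z ^ 2)⁻¹ (2 * n) k * e2

theorem sum_root (z : ℂ) (n : ℕ) (hz : IsPrimitiveRoot z (2 * n + 1)) :
    z ^ ((n + 1) ^ 2) * ∑ k ∈ range (2 * n + 1), z ^ (k * (k + 1)) =
      ∏ j ∈ range n, (z ^ (2 * j + 1) - (z ^ (2 * j + 1))⁻¹) := by
  have z0 : z ≠ 0 := hz.ne_zero (by omega)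
  have h1 : ∑ k ∈ range (2 * n + 1), z ^ (k * (k + 1)) = gf ((z ^ 2)⁻¹) (2 * n) :=
    sum_congr rfl fun k hk => (gbin_root z n hz k (by simp at hk; omega)).symm
  have h2 : z ^ ((n + 1) ^ 2) = ∏ j ∈ range n, z ^ (2 * j + 1) := by
    rw [show (n + 1) ^ 2 = n ^ 2 + (2 * n + 1) by ring, pow_add, hz.pow_eq_one, mul_one,
      prod_pow_eq_pow_sum]
    congr 1
    clear h1 hz
    induction n with
    | zero => simp
    | succ n ih => rw [sum_range_succ, ← ih]; ring
  rw [h1, h2, gf_even, ← prod_mul_distrib]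
  refine prod_congr rfl fun j _ => ?_
  rw [inv_pow, ← pow_mul, mul_comm 2 (2*j+1), pow_mul]
  field_simp

theorem sign_prod (p a m : ℕ) (hp : p = 2 * (a + m) + 1) (h1 : m ≤ a) (h2 : a ≤ m + 1) :
    0 < (-1 : ℝ) ^ m * ∏ j ∈ range (a + m), (2 * Real.sin (2 * Real.pi * (2 * j + 1 : ℕ) / p)) := by
  have hp0 : (0 : ℝ) < p := by exact_mod_cast (by omega : 0 < p)
  have hpi := Real.pi_pos
  rw [prod_range_add, mul_left_comm]
  apply mul_pos
  · refine prod_pos fun j hj => ?_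
    have hj : j < a := by simpa using hj
    have hlt : ((2 * (2 * j + 1) : ℕ) : ℝ) < p := by exact_mod_cast (by omega : 2 * (2 * j + 1) < p)
    apply mul_pos two_pos
    apply Real.sin_pos_of_pos_of_lt_pi
    · positivity
    · rw [div_lt_iff₀ hp0]
      push_cast at hlt ⊢
      nlinarith
  · have : (-1 : ℝ) ^ m = ∏ j ∈ range m, (-1 : ℝ) := by simp
    rw [this, ← prod_mul_distrib]
    refine prod_pos fun j hj => ?_
    have hj : j < m := by simpa using hj
    have hlt : (p : ℝ) < ((2 * (2 * (a + j) + 1) : ℕ) : ℝ) := by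
      exact_mod_cast (by omega : p < 2 * (2 * (a + j) + 1))
    have hlt2 : ((2 * (a + j) + 1 : ℕ) : ℝ) < p := by
      exact_mod_cast (by omega : (2 * (a + j) + 1) < p)
    have : Real.sin (2 * Real.pi * (2 * (a + j) + 1 : ℕ) / p) < 0 := by
      rw [← Real.sin_sub_two_pi]
      apply Real.sin_neg_of_neg_of_neg_pi_lt
      · rw [sub_neg, div_lt_iff₀ hp0]
        push_cast at hlt2 ⊢
        nlinarith
      · rw [lt_sub_iff_add_lt, lt_div_iff₀ hp0]
        push_cast at hlt ⊢
        nlinarith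
    push_cast at this ⊢
    linarith

theorem prod_eq_sin (p n : ℕ) :
    ∏ j ∈ range n, (cexp (2 * Real.pi * I / p) ^ (2 * j + 1) -
      (cexp (2 * Real.pi * I / p) ^ (2 * j + 1))⁻¹) =
    I ^ n * ((∏ j ∈ range n, (2 * Real.sin (2 * Real.pi * (2 * j + 1 : ℕ) / p)) : ℝ) : ℂ) := by
  have : I ^ n = ∏ j ∈ range n, I := by simp
  rw [this, ofReal_prod, ← prod_mul_distrib]
  refine prod_congr rfl fun j _ => ?_
  rw [← Complex.exp_nat_mul, ← Complex.exp_neg, ofReal_mul, ofReal_sin, Complex.sin]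
  set w : ℂ := ((2 * j + 1 : ℕ) : ℂ) * (2 * Real.pi * I / p) with hw
  have e : ((2 * Real.pi * (2 * j + 1 : ℕ) / p : ℝ) : ℂ) * I = w := by
    rw [hw]; push_cast; ring
  rw [neg_mul, e]
  push_cast
  linear_combination (cexp w - cexp (-w)) * I_sq

theorem sum_zmod (N : ℕ) [NeZero N] (f : ZMod N → ℂ) :
    ∑ x, f x = ∑ k ∈ range N, f (k : ZMod N) := by
  symm
  refine sum_bij (fun k _ => (k : ZMod N)) (by simp) ?_ ?_ (by simp)
  · intro a ha b hb h
    rw [ZMod.natCast_eq_natCast_iff] at h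
    simp at ha hb
    exact Nat.ModEq.eq_of_lt_of_lt h ha hb
  · intro b _
    exact ⟨b.val, by simpa using ZMod.val_lt b, by simp⟩

theorem sq_sum_eq (n : ℕ) :
    ∑ x : ZMod (2 * n + 1), ZMod.stdAddChar (x ^ 2) =
    I ^ n * ((∏ j ∈ range n, (2 * Real.sin (2 * Real.pi * (2 * j + 1 : ℕ) / (2 * n + 1 : ℕ))) : ℝ) : ℂ) := by
  rw [← prod_eq_sin, ← sum_root _ n (Complex.isPrimitiveRoot_exp _ (by omega)),
    ← Equiv.sum_comp (Equiv.addRight ((n + 1 : ℕ) : ZMod (2 * n + 1))), sum_zmod, mul_sum]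
  refine sum_congr rfl fun k _ => ?_
  have h0 : (2 * n + 1 : ZMod (2 * n + 1)) = 0 := by
    exact_mod_cast ZMod.natCast_self (2 * n + 1)
  have e : (Equiv.addRight ((n + 1 : ℕ) : ZMod (2 * n + 1)) (k : ZMod (2 * n + 1))) ^ 2 =
      (((n + 1) ^ 2 + k * (k + 1) : ℕ) : ℤ) := by
    simp only [Equiv.coe_addRight]
    push_cast
    linear_combination (k : ZMod (2 * n + 1)) * h0
  rw [e, ZMod.stdAddChar_coe, ← pow_add, ← Complex.exp_nat_mul]
  congr 1
  push_cast
  ring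

theorem sum_eq_gauss (N : ℕ) [Fact N.Prime] (h2 : N ≠ 2) (b : ZMod N) (hb : b ≠ 0) :
    ∑ x : ZMod N, ZMod.stdAddChar (b * x ^ 2) =
      (quadraticChar (ZMod N) b : ℂ) *
      gaussSum ((quadraticChar (ZMod N)).ringHomComp (Int.castRingHom ℂ)) ZMod.stdAddChar := by
  have hc : ringChar (ZMod N) ≠ 2 := by rwa [ZMod.ringChar_zmod_n]
  have h1 : ∑ x : ZMod N, ZMod.stdAddChar (b * x ^ 2) =
      ∑ a : ZMod N, ((quadraticChar (ZMod N) a : ℂ) + 1) * ZMod.stdAddChar (b * a) := by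
    rw [← sum_fiberwise univ (fun x : ZMod N => x ^ 2)]
    refine sum_congr rfl fun a _ => ?_
    rw [sum_congr rfl (g := fun _ => (ZMod.stdAddChar (b * a) : ℂ))
      (by intro x hx; simp at hx; rw [hx]), sum_const, nsmul_eq_mul]
    congr 1
    have := quadraticChar_card_sqrts hc a
    have t : (#{x : ZMod N | x ^ 2 = a} : ℤ) = quadraticChar (ZMod N) a + 1 := by
      rw [← this]; congr 2; ext; simp
    exact_mod_cast congrArg (Int.cast : ℤ → ℂ) t
  have h3 : ∑ a : ZMod N, (ZMod.stdAddChar (b * a) : ℂ) = 0 := by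
    have := AddChar.sum_mulShift b (ZMod.isPrimitive_stdAddChar N)
    simpa [hb, mul_comm] using this
  have h4 := gaussSum_mulShift ((quadraticChar (ZMod N)).ringHomComp (Int.castRingHom ℂ))
    ZMod.stdAddChar (Units.mk0 b hb)
  rw [h1]
  simp only [add_mul, one_mul, sum_add_distrib, h3, add_zero]
  rw [← h4, ← mul_assoc]
  have h5 : (quadraticChar (ZMod N) b : ℂ) * (quadraticChar (ZMod N) b : ℂ) = 1 := by
    have := quadraticChar_sq_one hb
    rw [← sq]; exact_mod_cast this
  simp only [Units.val_mk0, MulChar.ringHomComp_apply, eq_intCast, h5, one_mul, gaussSum,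
    AddChar.mulShift_apply]

theorem real_eq (R p : ℝ) (e : ℝ) (he : e ^ 2 = 1) (h : 0 < e * R) (hR : R ^ 2 = p) :
    e * R = Real.sqrt p := by
  rw [← hR, ← one_mul (R ^ 2), ← he, ← mul_pow, Real.sqrt_sq h.le]

theorem quadratic_gauss_sum_odd_prime (N : ℕ) [Fact N.Prime] (hodd : Odd N)
    (r : ℤ) (hr : ¬ (N : ℤ) ∣ r) :
    ((N % 4 = 1 →
        ∑ l ∈ Finset.Icc 1 N,
            Complex.exp (2 * Real.pi * Complex.I * (r : ℂ) * (l : ℂ) ^ 2 / (N : ℂ)) =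
          ((legendreSym N r : ℤ) : ℂ) * (Real.sqrt N : ℂ)) ∧
      (N % 4 = 3 →
        ∑ l ∈ Finset.Icc 1 N,
            Complex.exp (2 * Real.pi * Complex.I * (r : ℂ) * (l : ℂ) ^ 2 / (N : ℂ)) =
          Complex.I * ((legendreSym N r : ℤ) : ℂ) * (Real.sqrt N : ℂ))) := by
  have h2 : N ≠ 2 := by rintro rfl; exact absurd hodd (by decide)
  have hc : ringChar (ZMod N) ≠ 2 := by rwa [ZMod.ringChar_zmod_n]
  have hb : (r : ZMod N) ≠ 0 := by rwa [Ne, ZMod.intCast_zmod_eq_zero_iff_dvd]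
  set G := gaussSum ((quadraticChar (ZMod N)).ringHomComp (Int.castRingHom ℂ)) ZMod.stdAddChar
    with hG
  have hS : ∑ l ∈ Finset.Icc 1 N,
      Complex.exp (2 * Real.pi * Complex.I * (r : ℂ) * (l : ℂ) ^ 2 / (N : ℂ)) =
      ((legendreSym N r : ℤ) : ℂ) * G := by
    rw [legendreSym, ← sum_eq_gauss N h2 _ hb,
      ← Equiv.sum_comp (Equiv.addRight (1 : ZMod N)), sum_zmod,
      ← Finset.Ico_add_one_right_eq_Icc, sum_Ico_eq_sum_range]
    refine sum_congr rfl fun k _ => ?_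
    have e : (r : ZMod N) * (Equiv.addRight (1 : ZMod N) (k : ZMod N)) ^ 2 =
        ((r * (1 + k) ^ 2 : ℤ) : ZMod N) := by
      simp only [Equiv.coe_addRight]; push_cast; ring
    rw [e, ZMod.stdAddChar_coe]
    congr 1
    push_cast
    ring
  have hsq : G ^ 2 = (ZMod.χ₄ N : ℂ) * N := by
    rw [hG, gaussSum_sq ((MulChar.ringHomComp_ne_one_iff (RingHom.injective_int _)).mpr
      (quadraticChar_ne_one hc)) ((quadraticChar_isQuadratic _).comp _)
      (ZMod.isPrimitive_stdAddChar N)]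
    simp [quadraticChar_neg_one hc, ZMod.card]
  have hG1 : G = ∑ x : ZMod N, ZMod.stdAddChar (x ^ 2) := by
    have := sum_eq_gauss N h2 1 one_ne_zero
    simpa using this.symm
  rw [hS]
  clear_value G
  have key : ∀ n, N = 2 * n + 1 → G = I ^ n * ((∏ j ∈ range n,
      (2 * Real.sin (2 * Real.pi * (2 * j + 1 : ℕ) / N)) : ℝ) : ℂ) := by
    intro n hn
    rw [hG1]
    subst hn
    exact sq_sum_eq n
  constructor
  · intro h
    obtain ⟨m, hm⟩ : ∃ m, N = 2 * (m + m) + 1 := ⟨N / 4, by omega⟩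
    have k := key _ hm
    have s := sign_prod N m m hm le_rfl (by omega)
    set R : ℝ := ∏ j ∈ range (m + m), (2 * Real.sin (2 * Real.pi * (2 * j + 1 : ℕ) / N))
    have i1 : I ^ (m + m) = (-1) ^ m := by rw [← two_mul, pow_mul, I_sq]
    rw [i1] at k
    have i2 : ((-1 : ℂ) ^ m) ^ 2 = 1 := by rw [← pow_mul, mul_comm, pow_mul]; simp
    have hR : R ^ 2 = N := by
      rw [k, mul_pow, i2, ZMod.χ₄_nat_one_mod_four h] at hsq
      simp only [Int.cast_one, one_mul] at hsq
      exact_mod_cast hsq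
    rw [← real_eq R N _ (by rw [← pow_mul, mul_comm, pow_mul]; simp) s hR, k]
    push_cast
    ring
  · intro h
    obtain ⟨m, hm⟩ : ∃ m, N = 2 * (m + 1 + m) + 1 := ⟨N / 4, by omega⟩
    have k := key _ hm
    have s := sign_prod N (m + 1) m hm (by omega) le_rfl
    set R : ℝ := ∏ j ∈ range (m + 1 + m), (2 * Real.sin (2 * Real.pi * (2 * j + 1 : ℕ) / N))
    have i1 : I ^ (m + 1 + m) = I * (-1) ^ m := by
      rw [show m + 1 + m = 2 * m + 1 by ring, pow_succ, pow_mul, I_sq, mul_comm]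
    rw [i1] at k
    have i2 : ((-1 : ℂ) ^ m) ^ 2 = 1 := by rw [← pow_mul, mul_comm, pow_mul]; simp
    have hR : R ^ 2 = N := by
      rw [k, mul_pow, mul_pow, i2, I_sq, ZMod.χ₄_nat_three_mod_four h] at hsq
      have : (R : ℂ) ^ 2 = N := by
        push_cast at hsq
        linear_combination -hsq
      exact_mod_cast this
    rw [← real_eq R N _ (by rw [← pow_mul, mul_comm, pow_mul]; simp) s hR, k]
    push_cast
    ring
end

section
/- For every positive integer N, the Gauss sum G(1,N) := ∑_{l=1}^{N} exp(2πi·l²/N) equals: (1+i)·√N if N ≡ 0 (mod 4); √N if N ≡ 1 (mod 4); 0 if N ≡ 2 (mod 4); and i·√N if N ≡ 3 (mod 4). -/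
open Complex Finset

lemma gs_sqrt_mul (x : ℝ) (hx : 0 < x) (z : ℂ) (hz : z ≠ 0) :
    ((x : ℂ) * z) ^ (1 / 2 : ℂ) = (Real.sqrt x : ℂ) * z ^ (1 / 2 : ℂ) := by
  have hx' : (x : ℂ) ≠ 0 := by exact_mod_cast hx.ne'
  rw [Real.sqrt_eq_rpow, Complex.ofReal_cpow hx.le, Complex.cpow_def_of_ne_zero (mul_ne_zero hx' hz),
    Complex.cpow_def_of_ne_zero hz, Complex.cpow_def_of_ne_zero hx', ← Complex.exp_add,
    Complex.log_ofReal_mul hx hz, Complex.ofReal_log hx.le]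
  congr 1
  push_cast
  ring

lemma gs_theta_tendsto (a : ℝ) (τ : ℝ → ℂ) (F : Filter ℝ)
    (h : Filter.Tendsto (fun d => (τ d).im) F Filter.atTop) :
    Filter.Tendsto (fun d => jacobiTheta₂ a (τ d)) F (nhds 1) := by
  have key : Filter.Tendsto (fun d => ∑' n : ℤ, jacobiTheta₂_term n a (τ d)) F
      (nhds (∑' n : ℤ, if n = 0 then (1 : ℂ) else 0)) := by
    refine tendsto_tsum_of_dominated_convergence
      (bound := fun n : ℤ => Real.exp (-Real.pi * (1 * n ^ 2 - 2 * 0 * |n|))) ?_ ?_ ?_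
    · simpa using summable_pow_mul_jacobiTheta₂_term_bound 0 one_pos 0
    · intro n
      by_cases hn : n = 0
      · subst hn
        simp [jacobiTheta₂_term, tendsto_const_nhds]
      · rw [if_neg hn, tendsto_zero_iff_norm_tendsto_zero]
        simp_rw [norm_jacobiTheta₂_term]
        refine Real.tendsto_exp_atBot.comp ?_
        simp only [Complex.ofReal_im, mul_zero, sub_zero]
        refine Filter.Tendsto.const_mul_atTop_of_neg ?_ h
        have : (0 : ℝ) < (n : ℝ) ^ 2 := by positivity
        nlinarith [Real.pi_pos]
    · filter_upwards [h.eventually_ge_atTop 1] with d hd n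
      exact norm_jacobiTheta₂_term_le one_pos (by simp) hd n
  rw [tsum_ite_eq] at key
  exact key

lemma gs_decomp (M : ℕ) (hM : 0 < M) (r w : ℂ) (hr : r.im = 0) (hw : 0 < w.im)
    (hc : ∀ m l : ℤ, cexp (Real.pi * I * (m * M + l : ℤ) ^ 2 * r) = cexp (Real.pi * I * l ^ 2 * r)) :
    jacobiTheta₂ 0 (r + w) = ∑ l ∈ range M, cexp (Real.pi * I * l ^ 2 * r) *
      (1 / (-I * (M ^ 2 * w)) ^ (1 / 2 : ℂ) *
        jacobiTheta₂ ((l / M : ℝ) : ℂ) (-1 / (M ^ 2 * w))) := by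
  have : NeZero M := ⟨hM.ne'⟩
  have hMc : (M : ℂ) ≠ 0 := by exact_mod_cast hM.ne'
  have hw0 : w ≠ 0 := by rintro rfl; simp at hw
  have hs : Summable (fun n : ℤ => jacobiTheta₂_term n 0 (r + w)) :=
    (summable_jacobiTheta₂_term_iff _ _).2 (by simp [hr, hw])
  unfold jacobiTheta₂
  rw [← (Int.divModEquiv M).symm.tsum_eq]
  have hs' := (Int.divModEquiv M).symm.summable_iff.2 hs
  rw [← (Equiv.prodComm _ _).tsum_eq]
  have hs2 : Summable (fun c : Fin M × ℤ => jacobiTheta₂_term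
      ((Int.divModEquiv M).symm ((Equiv.prodComm (Fin M) ℤ) c)) 0 (r + w)) :=
    (Equiv.prodComm _ _).summable_iff.2 hs'
  rw [hs2.tsum_prod, tsum_fintype,
    Finset.sum_range (n := M) (fun l => cexp (Real.pi * I * l ^ 2 * r) *
      (1 / (-I * (M ^ 2 * w)) ^ (1 / 2 : ℂ) *
        ∑' n : ℤ, jacobiTheta₂_term n ((l / M : ℝ) : ℂ) (-1 / (M ^ 2 * w))))]
  refine Finset.sum_congr rfl fun l _ => ?_
  have hfe := jacobiTheta₂_functional_equation (l * M * w) (M ^ 2 * w)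
  have e1 : (l * M * w : ℂ) / (M ^ 2 * w) = ((l / M : ℝ) : ℂ) := by
    push_cast; field_simp
  have e2 : -Real.pi * I * (l * M * w : ℂ) ^ 2 / (M ^ 2 * w) = -(Real.pi * I * l ^ 2 * w) := by
    field_simp
  rw [e1, e2] at hfe
  have h3 : ∀ m : ℤ, jacobiTheta₂_term ((Int.divModEquiv M).symm (m, l)) 0 (r + w) =
      (cexp (Real.pi * I * l ^ 2 * r) * cexp (Real.pi * I * l ^ 2 * w)) *
        jacobiTheta₂_term m (l * M * w) (M ^ 2 * w) := by
    intro m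
    have := hc m l
    have h4 : (Int.divModEquiv M).symm (m, l) = m * M + (l : ℤ) := rfl
    rw [h4, jacobiTheta₂_term, jacobiTheta₂_term]
    rw [mul_zero, zero_add, mul_add, Complex.exp_add, this]
    push_cast
    simp only [← Complex.exp_add]
    congr 1
    ring
  change (∑' m : ℤ, jacobiTheta₂_term ((Int.divModEquiv M).symm (m, l)) 0 (r + w)) = _
  simp_rw [h3]
  rw [tsum_mul_left]
  change _ * jacobiTheta₂ _ _ = _ * (_ * jacobiTheta₂ _ _)
  rw [hfe, Complex.exp_neg]
  have := Complex.exp_ne_zero (Real.pi * I * l ^ 2 * w)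
  field_simp

lemma gs_asymp (M : ℕ) (hM : 0 < M) (r : ℂ) (hr : r.im = 0) (k : ℝ)
    (hc : ∀ m l : ℤ, cexp (Real.pi * I * (m * M + l : ℤ) ^ 2 * r) = cexp (Real.pi * I * l ^ 2 * r)) :
    Filter.Tendsto (fun d : ℝ => (Real.sqrt d : ℂ) *
        jacobiTheta₂ 0 (r + I * d / (M ^ 2 * (1 / 4 - I * k * d))))
      (nhdsWithin 0 (Set.Ioi 0))
      (nhds (∑ l ∈ range M, cexp (Real.pi * I * l ^ 2 * r) * (1 / 2))) := by
  have hMc : (M : ℂ) ≠ 0 := by exact_mod_cast hM.ne'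
  set v : ℝ → ℂ := fun d => 1 / 4 - I * k * d with hv
  have hvre : ∀ d, (v d).re = 1 / 4 := by intro d; simp [hv]
  have hv0 : ∀ d, v d ≠ 0 := by
    intro d h
    have := hvre d
    rw [h] at this; norm_num at this
  have hvt : Filter.Tendsto (fun d => (1 / v d) ^ (1 / 2 : ℂ)) (nhdsWithin 0 (Set.Ioi 0)) (nhds 2) := by
    have h1 : Filter.Tendsto (fun d => 1 / v d) (nhdsWithin 0 (Set.Ioi 0)) (nhds (1 / v 0)) := by
      refine Filter.Tendsto.mono_left ?_ nhdsWithin_le_nhds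
      refine ContinuousAt.tendsto (f := fun d => 1 / v d) ?_
      refine ContinuousAt.div (by fun_prop) (by simp only [hv]; fun_prop) (hv0 0)
    have h2 : 1 / v 0 = 4 := by simp [hv]
    rw [h2] at h1
    have h3 : (4 : ℂ) ^ (1 / 2 : ℂ) = 2 := by
      have := gs_sqrt_mul 4 (by norm_num) 1 one_ne_zero
      rw [show (4 : ℝ) = 2 ^ 2 by norm_num, Real.sqrt_sq (by norm_num)] at this
      norm_num at this ⊢
      exact this
    have := h1.cpow (tendsto_const_nhds (x := (1 / 2 : ℂ))) (by left; norm_num)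
    rwa [h3] at this
  have hth : ∀ l : ℕ, Filter.Tendsto (fun d => jacobiTheta₂ ((l / M : ℝ) : ℂ) (v d * I / d))
      (nhdsWithin 0 (Set.Ioi 0)) (nhds 1) := by
    intro l
    refine gs_theta_tendsto _ _ _ ?_
    have : (fun d : ℝ => (v d * I / d).im) = fun d : ℝ => (1 / 4) * d⁻¹ := by
      ext d
      rw [Complex.div_ofReal_im]
      simp [hvre, div_eq_mul_inv]
    rw [this]
    exact tendsto_inv_nhdsGT_zero.const_mul_atTop (by norm_num)
  have hlim : Filter.Tendsto (fun d : ℝ => ∑ l ∈ range M, cexp (Real.pi * I * l ^ 2 * r) *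
      (1 / (1 / v d) ^ (1 / 2 : ℂ) * jacobiTheta₂ ((l / M : ℝ) : ℂ) (v d * I / d)))
      (nhdsWithin 0 (Set.Ioi 0))
      (nhds (∑ l ∈ range M, cexp (Real.pi * I * l ^ 2 * r) * (1 / 2))) := by
    refine tendsto_finsetSum _ fun l _ => Filter.Tendsto.const_mul _ ?_
    have := (tendsto_const_nhds (x := (1 : ℂ)).div hvt (by norm_num)).mul (hth l)
    simpa using this
  refine hlim.congr' ?_
  filter_upwards [self_mem_nhdsWithin] with d hd
  have hd : 0 < d := hd
  have hdc : (d : ℂ) ≠ 0 := by exact_mod_cast hd.ne'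
  have hvd := hv0 d
  have hMR : (0 : ℝ) < M := by exact_mod_cast hM
  have hw : 0 < (I * d / (M ^ 2 * v d)).im := by
    have : I * d / (M ^ 2 * v d) = ((d / M ^ 2 : ℝ) : ℂ) * (I * (v d)⁻¹) := by
      push_cast; field_simp
    rw [this, Complex.im_ofReal_mul, Complex.I_mul_im, Complex.inv_re, hvre]
    have := Complex.normSq_pos.2 hvd
    positivity
  rw [gs_decomp M hM r _ hr hw hc, Finset.mul_sum]
  refine Finset.sum_congr rfl fun l _ => ?_
  have e1 : -I * (M ^ 2 * (I * d / (M ^ 2 * v d))) = (d : ℂ) * (1 / v d) := by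
    field_simp
    rw [Complex.I_sq]; ring
  have e2 : -1 / (M ^ 2 * (I * d / (M ^ 2 * v d))) = v d * I / d := by
    field_simp
    rw [Complex.I_sq]
  rw [e1, e2, gs_sqrt_mul d hd _ (one_div_ne_zero hvd)]
  have hsd : (Real.sqrt d : ℂ) ≠ 0 := by exact_mod_cast (Real.sqrt_pos.2 hd).ne'
  have : (1 / v d) ^ (1 / 2 : ℂ) ≠ 0 := by
    rw [Complex.cpow_def_of_ne_zero (one_div_ne_zero hvd)]; exact Complex.exp_ne_zero _
  field_simp

lemma gs_main (N : ℕ) (hN : 0 < N) :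
    ∑ l ∈ range N, cexp (Real.pi * I * l ^ 2 * (2 / N)) =
      1 / (-I * (2 / N)) ^ (1 / 2 : ℂ) * (1 + cexp (Real.pi * I * (-N / 2))) := by
  have hNc : (N : ℂ) ≠ 0 := by exact_mod_cast hN.ne'
  have hper : ∀ (x y : ℂ) (k : ℤ), x = y + k * (2 * Real.pi * I) → cexp x = cexp y := by
    intro x y k h
    rw [Complex.exp_eq_exp_iff_exists_int]; exact ⟨k, h⟩
  have h1 := gs_asymp N hN (2 / N) (by
      have : (2 / N : ℂ) = ((2 / N : ℝ) : ℂ) := by push_cast; rfl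
      rw [this, Complex.ofReal_im]) (1 / (2 * N)) (by
      intro m l
      refine hper _ _ (m ^ 2 * N + 2 * m * l) ?_
      push_cast; field_simp; ring)
  have h2 := gs_asymp 2 two_pos (-N / 2) (by
      have : (-N / 2 : ℂ) = ((-N / 2 : ℝ) : ℂ) := by push_cast; rfl
      rw [this, Complex.ofReal_im]) 0 (by
      intro m l
      refine hper _ _ (-N * (m ^ 2 + m * l)) ?_
      push_cast; field_simp; ring)
  set τ : ℝ → ℂ := fun d => 1 / (N / 2 - I * d) with hτ
  have hne : ∀ d : ℝ, (N / 2 - I * d : ℂ) ≠ 0 := by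
    intro d h
    have := congrArg Complex.re h
    have h4 : (N / 2 - I * d : ℂ) = ((N / 2 : ℝ) : ℂ) - I * d := by push_cast; rfl
    rw [h4] at this
    simp at this
    omega
  have h3 : Filter.Tendsto (fun d => 1 / (-I * τ d) ^ (1 / 2 : ℂ)) (nhdsWithin 0 (Set.Ioi 0))
      (nhds (1 / (-I * (2 / N)) ^ (1 / 2 : ℂ))) := by
    have hz : -I * (2 / N : ℂ) ≠ 0 := by simp [hN.ne']
    refine tendsto_const_nhds.div ?_ ?_
    · refine Filter.Tendsto.cpow ?_ tendsto_const_nhds ?_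
      · have e : (2 / N : ℂ) = τ 0 := by simp [hτ]
        rw [e]
        refine Filter.Tendsto.mono_left ?_ nhdsWithin_le_nhds
        refine ContinuousAt.tendsto (f := fun d => -I * τ d) ?_
        refine continuousAt_const.mul (ContinuousAt.div (by fun_prop) (by fun_prop) (hne 0))
      · right
        have : -I * (2 / N : ℂ) = ((2 / N : ℝ) : ℂ) * -I := by push_cast; ring
        rw [this, Complex.im_ofReal_mul]
        simp [hN.ne']
    · rw [Complex.cpow_def_of_ne_zero hz]; exact Complex.exp_ne_zero _
  have h4 := h3.mul h2
  have h5 := tendsto_nhds_unique (h1.congr ?_) h4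
  · rw [← Finset.sum_mul, ← Finset.sum_mul] at h5
    simp [Finset.sum_range_succ] at h5 ⊢
    linear_combination 2 * h5
  · intro d
    have hd := hne d
    have e1 : (2 / N : ℂ) + I * d / (N ^ 2 * (1 / 4 - I * (1 / (2 * N) : ℝ) * d)) = τ d := by
      have : (1 / 4 - I * (1 / (2 * N) : ℝ) * d : ℂ) = (N / 2 - I * d) / (2 * N) := by
        push_cast; field_simp; ring
      rw [this, hτ]
      dsimp only
      obtain ⟨q, hq⟩ : ∃ q : ℂ, q = N / 2 - I * d := ⟨_, rfl⟩
      have hq2 : I * d = N / 2 - q := by rw [hq]; ring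
      rw [← hq] at hd ⊢
      rw [hq2]
      field_simp
      ring
    have e2 : (-N / 2 : ℂ) + I * d / ((2 : ℕ) ^ 2 * (1 / 4 - I * (0 : ℝ) * d)) = -1 / τ d := by
      rw [hτ]
      push_cast
      field_simp
      ring
    rw [e1, e2, jacobiTheta₂_functional_equation 0 (τ d)]
    simp
    ring

lemma gs_final (N : ℕ) (hN : 0 < N) :
    ∑ l ∈ Finset.Icc 1 N, Complex.exp (2 * Real.pi * Complex.I * (l : ℂ) ^ 2 / (N : ℂ)) =
      (1 + I) / 2 * (Real.sqrt N : ℂ) * (1 + (-I) ^ N) := by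
  have hNc : (N : ℂ) ≠ 0 := by exact_mod_cast hN.ne'
  have h1 : ∑ l ∈ Finset.Icc 1 N, Complex.exp (2 * Real.pi * Complex.I * (l : ℂ) ^ 2 / (N : ℂ)) =
      ∑ l ∈ range N, cexp (Real.pi * I * l ^ 2 * (2 / N)) := by
    have e : ∀ l : ℕ, cexp (Real.pi * I * l ^ 2 * (2 / N)) =
        Complex.exp (2 * Real.pi * Complex.I * (l : ℂ) ^ 2 / (N : ℂ)) := by
      intro l; congr 1; ring
    simp_rw [e]
    have h2 := Finset.sum_range_succ (fun l : ℕ => Complex.exp (2 * Real.pi * Complex.I * (l : ℂ) ^ 2 / (N : ℂ))) N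
    have h3 := Finset.sum_range_succ' (fun l : ℕ => Complex.exp (2 * Real.pi * Complex.I * (l : ℂ) ^ 2 / (N : ℂ))) N
    have h4 : Complex.exp (2 * Real.pi * Complex.I * (N : ℂ) ^ 2 / (N : ℂ)) = 1 := by
      rw [Complex.exp_eq_one_iff]; exact ⟨N, by push_cast; field_simp⟩
    rw [← Finset.Ico_add_one_right_eq_Icc, Finset.sum_Ico_eq_sum_range]
    rw [h2, h4] at h3
    simp only [Nat.add_sub_cancel, add_comm 1]
    simp at h3 ⊢
    exact h3.symm
  rw [h1, gs_main N hN]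
  have hI : (-I) = cexp (-(Real.pi / 2 * I)) := by
    rw [Complex.exp_neg, Complex.exp_pi_div_two_mul_I, Complex.inv_I]
  have hp : cexp (Real.pi * I * (-N / 2)) = (-I) ^ N := by
    rw [hI, ← Complex.exp_nat_mul]; congr 1; ring
  have hNr : (0 : ℝ) < N := by exact_mod_cast hN
  have hs : (-I * (2 / N)) ^ (1 / 2 : ℂ) = (1 - I) / (Real.sqrt N : ℂ) := by
    have e : (-I * (2 / N) : ℂ) = ((1 - I) / (Real.sqrt N : ℂ)) ^ 2 := by
      rw [div_pow]
      have : (Real.sqrt N : ℂ) ^ 2 = N := by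
        exact_mod_cast Real.sq_sqrt hNr.le
      rw [this]; field_simp; ring_nf; rw [Complex.I_sq]; ring
    rw [e]
    have hr : 0 < ((1 - I) / (Real.sqrt N : ℂ)).re := by
      rw [Complex.div_ofReal_re]; simp; exact hN
    have ha := Complex.abs_arg_lt_pi_div_two_iff.2 (Or.inl hr)
    rw [abs_lt] at ha
    have := Complex.pow_cpow_nat_inv (n := 2) (x := (1 - I) / (Real.sqrt N : ℂ)) two_ne_zero
      (by push_cast; linarith) (by push_cast; linarith)
    simpa using this
  rw [hs, hp]
  have hsN : (Real.sqrt N : ℂ) ≠ 0 := by exact_mod_cast (Real.sqrt_pos.2 hNr).ne'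
  have h1I : (1 - I) ≠ 0 := by
    intro h; have := congrArg Complex.re h; simp at this
  congr 1
  field_simp
  ring_nf; rw [Complex.I_sq]; ring

theorem dirichlet_gauss_sum (N : ℕ) (hN : 0 < N) :
    (N % 4 = 0 →
        ∑ l ∈ Finset.Icc 1 N,
            Complex.exp (2 * Real.pi * Complex.I * (l : ℂ) ^ 2 / (N : ℂ)) =
          (1 + Complex.I) * (Real.sqrt N : ℂ)) ∧
      (N % 4 = 1 →
        ∑ l ∈ Finset.Icc 1 N,
            Complex.exp (2 * Real.pi * Complex.I * (l : ℂ) ^ 2 / (N : ℂ)) =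
          (Real.sqrt N : ℂ)) ∧
      (N % 4 = 2 →
        ∑ l ∈ Finset.Icc 1 N,
            Complex.exp (2 * Real.pi * Complex.I * (l : ℂ) ^ 2 / (N : ℂ)) = 0) ∧
      (N % 4 = 3 →
        ∑ l ∈ Finset.Icc 1 N,
            Complex.exp (2 * Real.pi * Complex.I * (l : ℂ) ^ 2 / (N : ℂ)) =
          Complex.I * (Real.sqrt N : ℂ)) := by
  rw [gs_final N hN]
  have h4 : (-I) ^ 4 = 1 := by rw [neg_pow, Complex.I_pow_four]; norm_num
  have hm : (-I) ^ N = (-I) ^ (N % 4) := by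
    conv_lhs => rw [← Nat.div_add_mod N 4, pow_add, pow_mul, h4, one_pow, one_mul]
  rw [hm]
  have hI := Complex.I_sq
  refine ⟨?_, ?_, ?_, ?_⟩ <;> intro h <;> rw [h]
  · ring
  · linear_combination (-(Real.sqrt N : ℂ) / 2) * hI
  · linear_combination ((1 + I) / 2 * (Real.sqrt N : ℂ)) * hI
  · linear_combination (-(Real.sqrt N : ℂ) / 2 * (I ^ 2 + I - 1)) * hI
end
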